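/- arXiv:1412.7174 — 2 statements merged into one kernel-verified Lean document; each statement's English description precedes it below -/
import Mathlib

section
/- Let (p_i, ρ_i)_{i=1}^m be a linearly independent (LI) ensemble on ℂ^n with r_i = rank ρ_i, and let (Π_i) be an optimal POVM for its minimum error discrimination. Then there exist nonzero vectors ψ_{ij} ∈ ℂ^n (1 ≤ i ≤ m, 1 ≤ j ≤ r_i) with p_iρ_i = ∑_{j=1}^{r_i} ψ_{ij}ψ_{ij}* and an orthonormal basis (w_{ij})_{1≤i≤m, 1≤j≤r_i} of ℂ^n with Π_i = ∑_{j=1}^{r_i} w_{ij}w_{ij}*, such that the rank-one POVM (w_{ij}w_{ij}*), indexed by the pairs (i,j), is an optimal POVM for the minimum error discrimination of the pure-state ensemble whose states are ψ_{ij}/‖ψ_{ij}‖ with probabilities ‖ψ_{ij}‖². -/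
open Matrix
open scoped ComplexOrder

noncomputable section

/-- Rank-one outer product `x x*` as an `n × n` complex matrix. -/
def outer {n : ℕ} (x : Fin n → ℂ) : Matrix (Fin n) (Fin n) ℂ :=
  Matrix.vecMulVec x (star x)

/-- A POVM indexed by `ι`: positive semidefinite elements summing to the identity. -/
def IsPOVM {ι : Type} [Fintype ι] {n : ℕ} (E : ι → Matrix (Fin n) (Fin n) ℂ) : Prop :=
  (∀ i, (E i).PosSemidef) ∧ ∑ i, E i = 1

/-- Success probability of the POVM `E` for the ensemble `(p, ρ)`. -/
def succProb {ι : Type} [Fintype ι] {n : ℕ} (p : ι → ℝ)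
    (ρ E : ι → Matrix (Fin n) (Fin n) ℂ) : ℝ :=
  ∑ i, p i * ((ρ i * E i).trace).re

/-- `P` is a POVM maximizing the success probability for the ensemble `(p, ρ)`. -/
def IsOptimal {ι : Type} [Fintype ι] {n : ℕ} (p : ι → ℝ)
    (ρ P : ι → Matrix (Fin n) (Fin n) ℂ) : Prop :=
  IsPOVM P ∧ ∀ E, IsPOVM E → succProb p ρ E ≤ succProb p ρ P

/-- An ensemble of states: positive probabilities summing to 1, states positive
semidefinite of trace 1. -/
def IsEnsemble {ι : Type} [Fintype ι] {n : ℕ} (p : ι → ℝ)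
    (ρ : ι → Matrix (Fin n) (Fin n) ℂ) : Prop :=
  (∀ i, 0 < p i) ∧ ∑ i, p i = 1 ∧ (∀ i, (ρ i).PosSemidef) ∧ ∀ i, (ρ i).trace = 1

/-- A linearly independent (LI) ensemble: the ranks sum to `n` and the column spaces
of the states together span `ℂ^n`. -/
def IsLIEnsemble {ι : Type} [Fintype ι] {n : ℕ} (p : ι → ℝ)
    (ρ : ι → Matrix (Fin n) (Fin n) ℂ) : Prop :=
  IsEnsemble p ρ ∧ (∑ i, (ρ i).rank = n) ∧
    (⨆ i, LinearMap.range (ρ i).mulVecLin) = ⊤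

/-- A projective measurement: mutually orthogonal Hermitian idempotents summing to
the identity. -/
def IsProjectiveMeasurement {ι : Type} [Fintype ι] {n : ℕ}
    (P : ι → Matrix (Fin n) (Fin n) ℂ) : Prop :=
  (∀ i j, i ≠ j → P i * P j = 0) ∧ (∀ i, P i * P i = P i) ∧
    (∀ i, (P i).IsHermitian) ∧ ∑ i, P i = 1

/-- The pretty good measurement of the ensemble `(q, σ)` (with elements
`S^{-1/2} qᵢσᵢ S^{-1/2}`, `S = ∑ qⱼσⱼ`, `S^{1/2}` the unique positive definite square
root of `S`) is an optimal POVM for the minimum error discrimination of `(p, ρ)`. -/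
def PGMIsOptimal {m n : ℕ} (q : Fin m → ℝ) (σ : Fin m → Matrix (Fin n) (Fin n) ℂ)
    (p : Fin m → ℝ) (ρ : Fin m → Matrix (Fin n) (Fin n) ℂ) : Prop :=
  ∀ R : Matrix (Fin n) (Fin n) ℂ, R.PosDef → R * R = ∑ j, (q j : ℂ) • σ j →
    IsOptimal p ρ (fun i => R⁻¹ * ((q i : ℂ) • σ i) * R⁻¹)


lemma psd_factor {n : ℕ} {X : Matrix (Fin n) (Fin n) ℂ} (hX : X.PosSemidef) :
    ∃ B : Matrix (Fin n) (Fin n) ℂ, X = Bᴴ * B := by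
  open scoped MatrixOrder in
  obtain ⟨B, hB⟩ := CStarAlgebra.nonneg_iff_eq_star_mul_self.mp hX.nonneg
  exact ⟨B, hB⟩

lemma psd_trace_mul_nonneg {n : ℕ} {X Y : Matrix (Fin n) (Fin n) ℂ} (hX : X.PosSemidef)
    (hY : Y.PosSemidef) : 0 ≤ (X * Y).trace := by
  obtain ⟨B, rfl⟩ := psd_factor hY
  rw [← Matrix.mul_assoc, Matrix.trace_mul_comm, ← Matrix.mul_assoc]
  exact (hX.mul_mul_conjTranspose_same B).trace_nonneg

lemma psd_trace_mul_zero {n : ℕ} {X Y : Matrix (Fin n) (Fin n) ℂ} (hX : X.PosSemidef)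
    (hY : Y.PosSemidef) (h : (X * Y).trace.re = 0) : X * Y = 0 := by
  have h0 : (X * Y).trace = 0 := by
    have := psd_trace_mul_nonneg hX hY
    apply Complex.ext
    · simpa using h
    · simpa using (Complex.le_def.1 this).2.symm
  obtain ⟨B, rfl⟩ := psd_factor hY
  obtain ⟨C, rfl⟩ := psd_factor hX
  have h1 : C * Bᴴ = 0 := by
    rw [← Matrix.trace_conjTranspose_mul_self_eq_zero_iff, ← h0]
    rw [Matrix.conjTranspose_mul, Matrix.conjTranspose_conjTranspose]
    rw [← Matrix.mul_assoc (Cᴴ * C), Matrix.trace_mul_comm (Cᴴ * C * Bᴴ)]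
    simp only [Matrix.mul_assoc]
  calc Cᴴ * C * (Bᴴ * B) = Cᴴ * (C * Bᴴ) * B := by simp only [Matrix.mul_assoc]
    _ = 0 := by rw [h1]; simp

lemma real_var {a b s : ℝ} (hs : 0 ≤ s)
    (h : ∀ ε : ℝ, 0 < ε → ε * s ≤ 2 → ε * a + ε ^ 2 * b ≤ 0) : a ≤ 0 := by
  by_contra! ha
  have hb := abs_nonneg b
  have hD : 0 < |b| + a * s + 1 := by positivity
  have h1 := h (a / (|b| + a * s + 1)) (by positivity) (by
    rw [div_mul_eq_mul_div, div_le_iff₀ hD]; nlinarith [mul_nonneg ha.le hs])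
  have h2 : a / (|b| + a * s + 1) * (a + a / (|b| + a * s + 1) * b) ≤ 0 := by
    linarith
  have h3 : 0 < a + a / (|b| + a * s + 1) * b := by
    have : a / (|b| + a * s + 1) * b = a * b / (|b| + a * s + 1) := by ring
    rw [this]
    have h4 : -a < a * b / (|b| + a * s + 1) := by
      rw [lt_div_iff₀ hD]
      nlinarith [neg_abs_le b, mul_nonneg ha.le hs, mul_nonneg ha.le (mul_nonneg ha.le hs)]
    linarith
  have := mul_pos (show 0 < a / (|b| + a * s + 1) by positivity) h3
  linarith

lemma outer_mul_self {n : ℕ} (x : Fin n → ℂ) : outer x * outer x = (star x ⬝ᵥ x) • outer x := by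
  rw [outer, Matrix.vecMulVec_mul_vecMulVec]
  simp

lemma trace_mul_outer {n : ℕ} (M : Matrix (Fin n) (Fin n) ℂ) (x y : Fin n → ℂ) :
    (M * Matrix.vecMulVec x (star y)).trace = star y ⬝ᵥ M *ᵥ x := by
  rw [Matrix.mul_vecMulVec, Matrix.trace_vecMulVec, dotProduct_comm]

lemma outer_psd {n : ℕ} (x : Fin n → ℂ) : (outer x).PosSemidef :=
  Matrix.posSemidef_vecMulVec_self_star x

lemma self_dot {n : ℕ} (x : Fin n → ℂ) :
    0 ≤ (star x ⬝ᵥ x).re ∧ star x ⬝ᵥ x = ((star x ⬝ᵥ x).re : ℂ) := by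
  have := Complex.le_def.1 (dotProduct_star_self_nonneg x)
  refine ⟨this.1, ?_⟩
  apply Complex.ext
  · simp
  · simpa using this.2.symm

lemma opt_cond {ι : Type} [Fintype ι] [DecidableEq ι] {n : ℕ}
    (A P : ι → Matrix (Fin n) (Fin n) ℂ) (hA : ∀ i, (A i).PosSemidef) (hP : IsPOVM P)
    (hopt : ∀ E, IsPOVM E → ∑ i, ((A i * E i).trace).re ≤ ∑ i, ((A i * P i).trace).re) :
    ∃ K : Matrix (Fin n) (Fin n) ℂ, K.IsHermitian ∧ (∀ j, (K - A j).PosSemidef) ∧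
      ∀ i, K * P i = A i * P i := by
  set G := ∑ i, A i * P i with hG
  have hGt : Gᴴ = ∑ i, P i * A i := by
    rw [hG, Matrix.conjTranspose_sum]
    refine Finset.sum_congr rfl fun i _ => ?_
    rw [Matrix.conjTranspose_mul, (hA i).1.eq, (hP.1 i).1.eq]
  set K := (2⁻¹ : ℂ) • (G + Gᴴ) with hK
  have hKH : K.IsHermitian := by
    rw [hK, Matrix.IsHermitian, Matrix.conjTranspose_smul, Matrix.conjTranspose_add,
      Matrix.conjTranspose_conjTranspose, add_comm]
    simp
  have hpsd : ∀ j, (K - A j).PosSemidef := by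
    intro j
    have hH : (K - A j).IsHermitian := hKH.sub (hA j).1
    refine Matrix.PosSemidef.of_dotProduct_mulVec_nonneg hH fun x => ?_
    have him : (star x ⬝ᵥ (K - A j) *ᵥ x).im = 0 := by
      have := hH.im_star_dotProduct_mulVec_self x
      simpa using this
    suffices hre : 0 ≤ (star x ⬝ᵥ (K - A j) *ᵥ x).re by
      exact Complex.le_def.2 ⟨hre, by simp [him]⟩
    rw [← trace_mul_outer]
    set Q := Matrix.vecMulVec x (star x) with hQ
    have hQp : Q.PosSemidef := outer_psd x
    obtain ⟨hs, hs'⟩ := self_dot x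
    set s := (star x ⬝ᵥ x).re with hs0
    have hQQ : Q * Q = (s : ℂ) • Q := by
      have := outer_mul_self x
      rw [hs'] at this; exact this
    have key : (-2 * ((K - A j) * Q).trace.re) ≤ 0 := by
      refine real_var (b := ∑ i, ((A i * (Q * P i * Q)).trace).re - s * (A j * Q).trace.re) hs ?_
      intro ε he hes
      set E : ι → Matrix (Fin n) (Fin n) ℂ := fun i =>
        (1 - (ε : ℂ) • Q) * P i * (1 - (ε : ℂ) • Q) +
          if i = j then ((2 * ε - ε ^ 2 * s : ℝ) : ℂ) • Q else 0 with hE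
      have hEp : IsPOVM E := by
        constructor
        · intro i
          refine Matrix.PosSemidef.add ?_ ?_
          · have hh : (1 - (ε : ℂ) • Q)ᴴ = 1 - (ε : ℂ) • Q := by
              simp [hQp.1.eq]
            have := (hP.1 i).mul_mul_conjTranspose_same (1 - (ε : ℂ) • Q)
            rwa [hh] at this
          · split_ifs
            · refine hQp.smul ?_
              rw [Complex.zero_le_real]
              nlinarith
            · exact Matrix.PosSemidef.zero
        · rw [hE, Finset.sum_add_distrib, ← Finset.sum_mul, ← Finset.mul_sum, hP.2]
          simp only [Finset.sum_ite_eq', Finset.mem_univ, if_true, Matrix.mul_one]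
          rw [Matrix.sub_mul, Matrix.mul_sub, Matrix.mul_sub]
          simp only [Matrix.one_mul, Matrix.mul_one, Matrix.smul_mul, Matrix.mul_smul, hQQ]
          push_cast
          module
      have h1 := hopt E hEp
      have h2 : ∀ i, ((A i * E i).trace).re = ((A i * P i).trace).re
          - ε * ((P i * A i * Q).trace.re + (A i * P i * Q).trace.re)
          + ε ^ 2 * ((A i * (Q * P i * Q)).trace).re
          + if i = j then (2 * ε - ε ^ 2 * s) * (A j * Q).trace.re else 0 := by
        intro i
        have h3 : A i * E i = A i * P i - (ε : ℂ) • (A i * Q * P i) - (ε : ℂ) • (A i * P i * Q)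
            + ((ε ^ 2 : ℝ) : ℂ) • (A i * (Q * P i * Q))
            + if i = j then ((2 * ε - ε ^ 2 * s : ℝ) : ℂ) • (A j * Q) else 0 := by
          rw [hE]
          simp only [Matrix.mul_add, Matrix.sub_mul, Matrix.mul_sub, Matrix.one_mul,
            Matrix.mul_one, Matrix.smul_mul, Matrix.mul_smul, Matrix.mul_assoc]
          split_ifs with hij
          · subst hij
            simp only [Matrix.mul_smul]
            push_cast
            module
          · simp only [Matrix.mul_zero]
            push_cast
            module
        rw [h3]
        have h4 : (A i * Q * P i).trace = (P i * A i * Q).trace := by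
          rw [Matrix.trace_mul_comm, Matrix.mul_assoc]
        split_ifs
        · simp only [Matrix.trace_add, Matrix.trace_sub, Matrix.trace_smul, smul_eq_mul,
            Complex.add_re, Complex.sub_re, Complex.re_ofReal_mul, h4]
          ring
        · simp only [Matrix.trace_add, Matrix.trace_sub, Matrix.trace_smul, smul_eq_mul,
            Complex.add_re, Complex.sub_re, Complex.re_ofReal_mul, h4, add_zero]
          ring
      have h5 : ((K - A j) * Q).trace.re = 2⁻¹ * (∑ i, ((P i * A i * Q).trace.re
          + (A i * P i * Q).trace.re)) - (A j * Q).trace.re := by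
        rw [hK, hGt, hG]
        have : (2⁻¹ : ℂ) = ((2⁻¹ : ℝ) : ℂ) := by simp
        rw [this]
        simp only [Matrix.sub_mul, Matrix.smul_mul, Matrix.add_mul, Finset.sum_mul,
          Matrix.trace_add, Matrix.trace_sub, Matrix.trace_smul, smul_eq_mul, Matrix.trace_sum,
            Complex.add_re, Complex.sub_re, Complex.re_ofReal_mul, Complex.re_sum,
            Finset.sum_add_distrib]
        ring
      rw [Finset.sum_congr rfl fun i _ => h2 i] at h1
      simp only [Finset.sum_add_distrib, Finset.sum_sub_distrib, ← Finset.mul_sum,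
        Finset.sum_ite_eq', Finset.mem_univ, if_true] at h1 h5
      rw [h5]
      nlinarith
    linarith
  have hz : ∀ i, (K - A i) * P i = 0 := by
    have hnn : ∀ i, 0 ≤ ((K - A i) * P i).trace.re := fun i =>
      (Complex.le_def.1 (psd_trace_mul_nonneg (hpsd i) (hP.1 i))).1
    have hsum : ∑ i, ((K - A i) * P i).trace.re = 0 := by
      rw [← Complex.re_sum, ← Matrix.trace_sum]
      simp only [Matrix.sub_mul, Finset.sum_sub_distrib]
      rw [← Finset.mul_sum, hP.2, Matrix.mul_one, ← hG, hK]
      have : (2⁻¹ : ℂ) = ((2⁻¹ : ℝ) : ℂ) := by simp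
      rw [this]
      simp only [Matrix.trace_add, Matrix.trace_sub, Matrix.trace_smul, smul_eq_mul,
        Complex.add_re, Complex.sub_re, Complex.re_ofReal_mul, Matrix.trace_conjTranspose]
      simp
      ring
    intro i
    exact psd_trace_mul_zero (hpsd i) (hP.1 i)
      ((Finset.sum_eq_zero_iff_of_nonneg fun i _ => hnn i).1 hsum i (Finset.mem_univ i))
  refine ⟨K, hKH, hpsd, fun i => ?_⟩
  have := hz i
  rwa [Matrix.sub_mul, sub_eq_zero] at this

lemma proj_lemma {ι : Type} [Fintype ι] [DecidableEq ι] {n : ℕ}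
    (P : ι → Matrix (Fin n) (Fin n) ℂ) (hP : ∑ i, P i = 1) (hr : ∑ i, (P i).rank ≤ n) :
    (∑ i, (P i).rank = n) ∧ (∀ i j, i ≠ j → P i * P j = 0) ∧ ∀ i, P i * P i = P i := by
  let Φ : (∀ i, LinearMap.range (P i).mulVecLin) →ₗ[ℂ] (Fin n → ℂ) :=
    ∑ i, (Submodule.subtype _).comp (LinearMap.proj i)
  have hΦ : ∀ f, Φ f = ∑ i, (f i : Fin n → ℂ) := by
    intro f; simp [Φ]
  let el : (Fin n → ℂ) → ∀ i, LinearMap.range (P i).mulVecLin :=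
    fun x i => ⟨P i *ᵥ x, ⟨x, rfl⟩⟩
  have hel : ∀ x, Φ (el x) = x := by
    intro x
    rw [hΦ]
    simp only [el]
    rw [← Matrix.sum_mulVec, hP, Matrix.one_mulVec]
  have hsurj : Function.Surjective Φ := fun x => ⟨_, hel x⟩
  have hdim : Module.finrank ℂ (∀ i, LinearMap.range (P i).mulVecLin) = ∑ i, (P i).rank := by
    rw [Module.finrank_pi_fintype]; rfl
  have hle := LinearMap.finrank_le_finrank_of_surjective hsurj
  rw [hdim, Module.finrank_fin_fun] at hle
  have heq : ∑ i, (P i).rank = n := le_antisymm hr hle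
  have hinj : Function.Injective Φ := by
    rw [LinearMap.injective_iff_surjective_of_finrank_eq_finrank]
    · exact hsurj
    · rw [hdim, heq, Module.finrank_fin_fun]
  have hmul : ∀ i j, i ≠ j → P i * P j = 0 := by
    intro i j hij
    apply Matrix.ext_of_mulVec_single
    intro k
    set x : Fin n → ℂ := Pi.single k 1
    have : el (P j *ᵥ x) = Pi.single j ⟨P j *ᵥ x, ⟨x, rfl⟩⟩ := by
      apply hinj
      rw [hel, hΦ, Finset.sum_eq_single j]
      · simp
      · intro b _ hb
        rw [Pi.single_eq_of_ne hb]; rfl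
      · simp
    have h2 := congrArg Subtype.val (congrFun this i)
    rw [Pi.single_eq_of_ne hij] at h2
    simp only [el] at h2
    rw [← Matrix.mulVec_mulVec, h2]; simp
  refine ⟨heq, hmul, fun i => ?_⟩
  conv_rhs => rw [← Matrix.one_mul (P i), ← hP, Finset.sum_mul]
  rw [Finset.sum_eq_single i]
  · intro b _ hb; exact hmul b i hb
  · simp

lemma outer_mulVec' {n : ℕ} (x y : Fin n → ℂ) : outer x *ᵥ y = (star x ⬝ᵥ y) • x := by
  rw [outer, Matrix.vecMulVec_mulVec]
  simp

lemma mul_outer_mul {n : ℕ} (M : Matrix (Fin n) (Fin n) ℂ) (x : Fin n → ℂ) :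
    M * outer x * Mᴴ = outer (M *ᵥ x) := by
  rw [outer, outer, Matrix.mul_vecMulVec, Matrix.vecMulVec_mul, Matrix.star_mulVec]

lemma outer_smul {n : ℕ} (c : ℂ) (x : Fin n → ℂ) :
    outer (c • x) = (c * star c) • outer x := by
  rw [outer, outer, star_smul, Matrix.smul_vecMulVec, Matrix.vecMulVec_smul, smul_smul]

lemma eig_decomp {n : ℕ} {C : Matrix (Fin n) (Fin n) ℂ} (hC : C.IsHermitian) :
    ∃ (v : Fin n → (Fin n → ℂ)) (c : Fin n → ℝ),
      (∀ k, C *ᵥ v k = (c k : ℂ) • v k) ∧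
      (∀ k l, star (v k) ⬝ᵥ v l = if k = l then 1 else 0) ∧
      (∑ k, outer (v k) = 1) ∧ C.rank = Fintype.card {k // c k ≠ 0} := by
  refine ⟨fun k => ⇑(hC.eigenvectorBasis k), hC.eigenvalues, ?_, ?_, ?_, ?_⟩
  · intro k
    have := hC.mulVec_eigenvectorBasis k
    rw [this]
    ext i; simp
  · intro k l
    have := (orthonormal_iff_ite.1 hC.eigenvectorBasis.orthonormal) k l
    rw [EuclideanSpace.inner_eq_star_dotProduct, dotProduct_comm] at this
    exact this
  · have h := Unitary.coe_mul_star_self hC.eigenvectorUnitary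
    rw [← h]
    ext i j
    rw [Matrix.sum_apply, Matrix.mul_apply]
    refine Finset.sum_congr rfl fun k _ => ?_
    simp [outer, Matrix.vecMulVec_apply, Matrix.star_apply]
  · exact hC.rank_eq_card_non_zero_eigs

lemma diag_lemma {n r : ℕ} {K P A : Matrix (Fin n) (Fin n) ℂ} (hK : K.PosDef)
    (hPh : P.IsHermitian) (hPP : P * P = P) (hA : A.IsHermitian) (hKP : K * P = A * P)
    (hrP : P.rank = r) (hrA : A.rank = r) :
    ∃ (w ψ : Fin r → (Fin n → ℂ)) (c : Fin r → ℝ), (∀ k, 0 < c k) ∧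
      (∀ k l, star (w k) ⬝ᵥ w l = if k = l then 1 else 0) ∧
      (P = ∑ k, outer (w k)) ∧ (A = ∑ k, outer (ψ k)) ∧
      (∀ k, K *ᵥ w k = (c k : ℂ) • ψ k) ∧ (∀ k, star (ψ k) ⬝ᵥ w k = (c k : ℂ)) := by
  set C := P * K * P with hC
  have hCh : C.IsHermitian := by
    have := hK.posSemidef.mul_mul_conjTranspose_same P
    rw [hPh.eq] at this
    exact this.1
  have hker : ∀ x, C *ᵥ x = 0 → P *ᵥ x = 0 := by
    intro x hx
    by_contra hne
    have h1 := hK.dotProduct_mulVec_pos hne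
    have h2 : star (P *ᵥ x) ⬝ᵥ K *ᵥ (P *ᵥ x) = star x ⬝ᵥ C *ᵥ x := by
      rw [Matrix.star_mulVec, hPh.eq, ← Matrix.dotProduct_mulVec, hC]
      simp only [Matrix.mulVec_mulVec, Matrix.mul_assoc]
    rw [h2, hx, dotProduct_zero] at h1
    exact lt_irrefl _ h1
  have hkereq : LinearMap.ker C.mulVecLin = LinearMap.ker P.mulVecLin := by
    ext x
    simp only [LinearMap.mem_ker, Matrix.mulVecLin_apply]
    refine ⟨hker x, fun h => ?_⟩
    rw [hC, ← Matrix.mulVec_mulVec, h, Matrix.mulVec_zero]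
  have hCr : C.rank = r := by
    have h1 := LinearMap.finrank_range_add_finrank_ker C.mulVecLin
    have h2 := LinearMap.finrank_range_add_finrank_ker P.mulVecLin
    rw [hkereq] at h1
    rw [← hrP]
    unfold Matrix.rank
    omega
  obtain ⟨v, d, hv, hvo, hvs, hcard⟩ := eig_decomp hCh
  rw [hCr] at hcard
  let e : Fin r ≃ {k // d k ≠ 0} := Fintype.equivOfCardEq (by simp [hcard])
  have hPv : ∀ k, d k ≠ 0 → P *ᵥ v k = v k := by
    intro k hk
    have hk' : (d k : ℂ) ≠ 0 := by exact_mod_cast hk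
    have h1 : P *ᵥ (C *ᵥ v k) = C *ᵥ v k := by
      rw [Matrix.mulVec_mulVec, hC, ← Matrix.mul_assoc, ← Matrix.mul_assoc, hPP]
    rw [hv k, Matrix.mulVec_smul] at h1
    exact smul_right_injective _ hk' h1
  have hPv0 : ∀ k, d k = 0 → P *ᵥ v k = 0 := by
    intro k hk
    apply hker
    rw [hv k, hk]; simp
  have hPsum : P = ∑ k : Fin r, outer (v (e k)) := by
    have h1 : P = ∑ k, outer (P *ᵥ v k) := by
      conv_lhs => rw [← hPP]
      conv_lhs => rw [← Matrix.mul_one P, Matrix.mul_assoc, ← hvs]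
      simp only [← mul_outer_mul, hPh.eq, ← Finset.mul_sum, ← Finset.sum_mul, hvs, Matrix.one_mul,
        Matrix.mul_one]
    rw [Equiv.sum_comp e (fun k : {k // d k ≠ 0} => outer (v k))]
    rw [h1, ← Fintype.sum_subtype_add_sum_subtype (fun k => d k ≠ 0)]
    rw [Finset.sum_congr rfl fun (k : {k // d k ≠ 0}) _ =>
      show outer (P *ᵥ v k) = outer (v k) by rw [hPv k k.2]]
    rw [add_eq_left]
    refine Finset.sum_eq_zero fun k _ => ?_
    rw [hPv0 k (not_not.1 k.2)]
    simp [outer]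
  have hKv : ∀ k, d k ≠ 0 → K *ᵥ v k = A *ᵥ v k := by
    intro k hk
    rw [← hPv k hk, Matrix.mulVec_mulVec, Matrix.mulVec_mulVec, hKP]
  have hform : ∀ k l, d k ≠ 0 → d l ≠ 0 →
      star (v k) ⬝ᵥ A *ᵥ v l = if k = l then (d l : ℂ) else 0 := by
    intro k l hk hl
    rw [← hKv l hl]
    have : star (v k) ⬝ᵥ C *ᵥ v l = star (v k) ⬝ᵥ K *ᵥ v l := by
      conv_rhs => rw [← hPv k hk, ← hPv l hl]
      rw [Matrix.star_mulVec, hPh.eq, ← Matrix.dotProduct_mulVec, hC]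
      simp only [Matrix.mulVec_mulVec, Matrix.mul_assoc]
    rw [← this, hv l, dotProduct_smul, hvo]
    simp
  have hdpos : ∀ k, d k ≠ 0 → 0 < d k := by
    intro k hk
    have hne : v k ≠ 0 := by
      intro h
      have := hvo k k
      rw [h] at this; simp at this
    have h1 := hK.dotProduct_mulVec_pos hne
    rw [hKv k hk, hform k k hk hk, if_pos rfl] at h1
    exact_mod_cast h1
  have hepos : ∀ k, 0 < d (e k) := fun k => hdpos _ (e k).2
  have hsq : ∀ k, ((Real.sqrt (d (e k)) : ℝ) : ℂ) * ((Real.sqrt (d (e k)) : ℝ) : ℂ) = d (e k) := by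
    intro k
    rw [← Complex.ofReal_mul, Real.mul_self_sqrt (hepos k).le]
  have hsne : ∀ k, ((Real.sqrt (d (e k)) : ℝ) : ℂ) ≠ 0 := by
    intro k
    exact_mod_cast (Real.sqrt_pos.2 (hepos k)).ne'
  have hdne : ∀ k, (d (e k) : ℂ) ≠ 0 := by
    intro k
    exact_mod_cast (hepos k).ne'
  set w : Fin r → (Fin n → ℂ) := fun k => v (e k) with hw
  set ψ : Fin r → (Fin n → ℂ) := fun k => ((Real.sqrt (d (e k)) : ℝ) : ℂ)⁻¹ • (A *ᵥ w k) with hψ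
  have hout : ∀ k, outer (ψ k) = (d (e k) : ℂ)⁻¹ • (A * outer (w k) * A) := by
    intro k
    have h2 := mul_outer_mul A (w k)
    rw [hA.eq] at h2
    rw [h2, hψ, outer_smul, ← hsq, mul_inv]
    congr 2
    simp
  refine ⟨w, ψ, fun k => Real.sqrt (d (e k)), fun k => Real.sqrt_pos.2 (hepos k), ?_, hPsum, ?_,
    ?_, ?_⟩
  · intro k l
    rw [hw]
    simp only [hvo]
    have : ((e k : Fin n) = (e l : Fin n)) ↔ k = l := by
      rw [Subtype.coe_inj, e.injective.eq_iff]
    simp [this]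
  · -- A = ∑ outer ψ
    have hrange : LinearMap.range (A * P).mulVecLin = LinearMap.range A.mulVecLin := by
      apply Submodule.eq_of_le_of_finrank_eq
      · rintro _ ⟨x, rfl⟩
        exact ⟨P *ᵥ x, by simp [Matrix.mulVec_mulVec]⟩
      · have h1 : (A * P).rank = r := by
          rw [← hKP, Matrix.rank_mul_eq_right_of_isUnit_det _ _
            ((Matrix.isUnit_iff_isUnit_det _).1 hK.isUnit), hrP]
        have h2 := h1.trans hrA.symm
        exact h2
    set S : Matrix (Fin n) (Fin n) ℂ := ∑ k, (d (e k) : ℂ)⁻¹ • outer (w k) with hS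
    have hsumS : ∑ k, outer (ψ k) = A * S * A := by
      rw [hS, Finset.mul_sum, Finset.sum_mul]
      refine Finset.sum_congr rfl fun k _ => ?_
      rw [hout, Matrix.mul_smul, Matrix.smul_mul]
    have hASAw : ∀ l, S *ᵥ (A *ᵥ w l) = w l := by
      intro l
      rw [hS, Matrix.sum_mulVec, Finset.sum_eq_single l]
      · rw [Matrix.smul_mulVec, outer_mulVec', hform _ _ (e l).2 (e l).2, if_pos rfl, smul_smul,
          inv_mul_cancel₀ (hdne l), one_smul]
      · intro b _ hb
        rw [Matrix.smul_mulVec, outer_mulVec', hform _ _ (e b).2 (e l).2, if_neg]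
        · simp
        · rw [Subtype.coe_inj, e.injective.eq_iff]; exact hb
      · simp
    have hSAP : S * A * P = P := by
      conv_lhs => rw [hPsum]
      conv_rhs => rw [hPsum]
      rw [Finset.mul_sum]
      refine Finset.sum_congr rfl fun k _ => ?_
      rw [outer, Matrix.mul_vecMulVec, ← Matrix.mulVec_mulVec]
      congr 1
      exact hASAw k
    rw [hsumS]
    apply Matrix.ext_of_mulVec_single
    intro k
    set x : Fin n → ℂ := Pi.single k 1
    have hx : A *ᵥ x ∈ LinearMap.range (A * P).mulVecLin := by
      rw [hrange]; exact ⟨x, rfl⟩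
    obtain ⟨y, hy⟩ := hx
    rw [Matrix.mulVecLin_apply] at hy
    rw [← Matrix.mulVec_mulVec, ← hy, Matrix.mulVec_mulVec]
    congr 1
    have : A * S * (A * P) = A * (S * A * P) := by simp only [Matrix.mul_assoc]
    rw [this, hSAP]
  · intro k
    rw [hψ]
    simp only
    rw [smul_smul, mul_inv_cancel₀ (hsne k), one_smul]
    exact hKv _ (e k).2
  · intro k
    rw [hψ]
    simp only
    rw [star_smul, Matrix.star_mulVec, hA.eq, smul_dotProduct, ← Matrix.dotProduct_mulVec,
      hform _ _ (e k).2 (e k).2, if_pos rfl, ← hsq]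
    have h := hsne k
    simp only [smul_eq_mul, star_inv₀, Complex.star_def, Complex.conj_ofReal]
    field_simp

theorem stmt_17 {m n : ℕ} (p : Fin m → ℝ) (ρ : Fin m → Matrix (Fin n) (Fin n) ℂ)
    (hens : IsLIEnsemble p ρ)
    (r : Fin m → ℕ) (hr : ∀ i, (ρ i).rank = r i)
    (P : Fin m → Matrix (Fin n) (Fin n) ℂ) (hopt : IsOptimal p ρ P) :
    ∃ ψ w : ((i : Fin m) × Fin (r i)) → (Fin n → ℂ),
      (∀ a, ψ a ≠ 0) ∧
      (∀ i, (p i : ℂ) • ρ i = ∑ j : Fin (r i), outer (ψ ⟨i, j⟩)) ∧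
      (∀ a b, star (w a) ⬝ᵥ w b = if a = b then 1 else 0) ∧
      (∀ i, P i = ∑ j : Fin (r i), outer (w ⟨i, j⟩)) ∧
      IsOptimal (fun a => (star (ψ a) ⬝ᵥ ψ a).re)
        (fun a => (((star (ψ a) ⬝ᵥ ψ a).re : ℝ) : ℂ)⁻¹ • outer (ψ a))
        (fun a => outer (w a)) := by
  obtain ⟨⟨hp, hp1, hρ, -⟩, hrank, hspan⟩ := hens
  obtain ⟨hP, hmax⟩ := hopt
  set A : Fin m → Matrix (Fin n) (Fin n) ℂ := fun i => (p i : ℂ) • ρ i with hAdef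
  have hpc : ∀ i, (p i : ℂ) ≠ 0 := fun i => by exact_mod_cast (hp i).ne'
  have hA : ∀ i, (A i).PosSemidef := fun i =>
    (hρ i).smul (by rw [Complex.zero_le_real]; exact (hp i).le)
  have hsucc : ∀ E, succProb p ρ E = ∑ i, ((A i * E i).trace).re := by
    intro E
    unfold succProb
    refine Finset.sum_congr rfl fun i _ => ?_
    simp [hAdef]
  obtain ⟨K, hKH, hKA, hKP⟩ := opt_cond A P hA hP (fun E hE => by
    rw [← hsucc, ← hsucc]; exact hmax E hE)
  have hrA : ∀ i, (A i).rank = r i := by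
    intro i
    rw [← hr i]
    exact Matrix.rank_smul_of_mem_nonZeroDivisors _ (mem_nonZeroDivisors_of_ne_zero (hpc i))
  -- K positive definite
  have hKpsd : K.PosSemidef := by
    have hm : 0 < m := by
      rcases Nat.eq_zero_or_pos m with h | h
      · subst h; simp at hp1
      · exact h
    have := (hKA ⟨0, hm⟩).add (hA ⟨0, hm⟩)
    simpa using this
  have hKpd : K.PosDef := by
    refine Matrix.PosDef.of_dotProduct_mulVec_pos hKH fun x hx => ?_
    refine lt_of_le_of_ne (hKpsd.dotProduct_mulVec_nonneg x) fun h0 => hx ?_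
    have hAx : ∀ i, ρ i *ᵥ x = 0 := by
      intro i
      have h1 := (hKA i).dotProduct_mulVec_nonneg x
      rw [Matrix.sub_mulVec, dotProduct_sub, ← h0, zero_sub] at h1
      have h2 := (hA i).dotProduct_mulVec_nonneg x
      have h3 : star x ⬝ᵥ A i *ᵥ x = 0 := le_antisymm (by simpa using h1) h2
      rw [(hA i).dotProduct_mulVec_zero_iff] at h3
      simp only [hAdef, Matrix.smul_mulVec] at h3
      exact (smul_eq_zero.1 h3).resolve_left (hpc i)
    let f : (Fin n → ℂ) →ₗ[ℂ] ℂ :=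
      { toFun := fun y => star x ⬝ᵥ y
        map_add' := fun y z => dotProduct_add _ _ _
        map_smul' := fun c y => by simp }
    have hf : (⊤ : Submodule ℂ (Fin n → ℂ)) ≤ LinearMap.ker f := by
      rw [← hspan, iSup_le_iff]
      rintro i _ ⟨y, rfl⟩
      rw [LinearMap.mem_ker]
      show star x ⬝ᵥ (ρ i *ᵥ y) = 0
      rw [Matrix.dotProduct_mulVec]
      have : star x ᵥ* ρ i = 0 := by
        have h := congrArg star (hAx i)
        rwa [Matrix.star_mulVec, (hρ i).1.eq, star_zero] at h
      rw [this, zero_dotProduct]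
    have hxx : star x ⬝ᵥ x = 0 := hf (Submodule.mem_top : x ∈ ⊤)
    exact dotProduct_star_self_eq_zero.1 hxx
  have hrPle : ∀ i, (P i).rank ≤ r i := by
    intro i
    rw [← Matrix.rank_mul_eq_right_of_isUnit_det K (P i)
            ((Matrix.isUnit_iff_isUnit_det _).1 hKpd.isUnit), hKP i, ← hrA i]
    exact Matrix.rank_mul_le_left _ _
  have hrsum : ∑ i, r i = n := by simpa [hr] using hrank
  obtain ⟨hPr, hPorth, hPid⟩ := proj_lemma P hP.2
    ((Finset.sum_le_sum fun i _ => hrPle i).trans hrsum.le)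
  have hrP : ∀ i, (P i).rank = r i := by
    intro i
    have := (Finset.sum_eq_sum_iff_of_le (fun i _ => hrPle i)).1 (hPr.trans hrsum.symm)
    exact this i (Finset.mem_univ i)
  choose w ψ c hc hw hPw hAψ hKw hψw using fun i => diag_lemma hKpd (hP.1 i).1 (hPid i) (hA i).1
    (hKP i) (hrP i) (hrA i)
  have hψne : ∀ i j, ψ i j ≠ 0 := by
    intro i j h
    have h1 := hψw i j
    rw [h] at h1
    simp at h1
    exact (hc i j).ne (by exact_mod_cast h1)
  have hPwv : ∀ i j, P i *ᵥ w i j = w i j := by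
    intro i j
    rw [hPw i, Matrix.sum_mulVec, Finset.sum_eq_single j]
    · rw [outer_mulVec', hw, if_pos rfl, one_smul]
    · intro b _ hb
      rw [outer_mulVec', hw, if_neg hb, zero_smul]
    · simp
  have hsumw : ∑ a : (i : Fin m) × Fin (r i), outer (w a.1 a.2) = 1 := by
    rw [Fintype.sum_sigma, ← hP.2]
    exact Finset.sum_congr rfl fun i _ => (hPw i).symm
  refine ⟨fun a => ψ a.1 a.2, fun a => w a.1 a.2, fun a => hψne _ _, fun i => hAψ i, ?_,
    fun i => hPw i, ⟨fun a => outer_psd _, hsumw⟩, ?_⟩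
  · rintro ⟨i, j⟩ ⟨k, l⟩
    by_cases hik : i = k
    · subst hik
      simp [hw]
    · rw [if_neg (by simp [hik])]
      simp only
      rw [← hPwv i j, ← hPwv k l, Matrix.star_mulVec, (hP.1 i).1.eq, ← Matrix.dotProduct_mulVec,
        Matrix.mulVec_mulVec, hPorth i k hik]
      simp
  · intro E hE
    have hsu : ∀ F : ((i : Fin m) × Fin (r i)) → Matrix (Fin n) (Fin n) ℂ,
        succProb (fun a : (i : Fin m) × Fin (r i) => (star (ψ a.1 a.2) ⬝ᵥ ψ a.1 a.2).re)
        (fun a => (((star (ψ a.1 a.2) ⬝ᵥ ψ a.1 a.2).re : ℝ) : ℂ)⁻¹ • outer (ψ a.1 a.2)) F =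
        ∑ a, (outer (ψ a.1 a.2) * F a).trace.re := by
      intro F
      unfold succProb
      refine Finset.sum_congr rfl fun a _ => ?_
      have hne : (star (ψ a.1 a.2) ⬝ᵥ ψ a.1 a.2).re ≠ 0 := by
        intro h
        have h1 := (self_dot (ψ a.1 a.2)).2
        rw [h, Complex.ofReal_zero, dotProduct_star_self_eq_zero] at h1
        exact hψne _ _ h1
      rw [Matrix.smul_mul, Matrix.trace_smul, smul_eq_mul, ← Complex.ofReal_inv,
        Complex.re_ofReal_mul, ← mul_assoc, mul_inv_cancel₀ hne, one_mul]
    rw [hsu, hsu]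
    have hup : ∑ a, (outer (ψ a.1 a.2) * E a).trace.re ≤ K.trace.re := by
      have h1 : K.trace.re = ∑ a, (K * E a).trace.re := by
        rw [← Complex.re_sum, ← Matrix.trace_sum, ← Finset.mul_sum, hE.2, Matrix.mul_one]
      rw [h1]
      refine Finset.sum_le_sum fun a _ => ?_
      have h2 : (K - outer (ψ a.1 a.2)).PosSemidef := by
        have h3 : K - outer (ψ a.1 a.2) = (K - A a.1) +
            ∑ j ∈ Finset.univ.erase a.2, outer (ψ a.1 j) := by
          rw [hAψ a.1, ← Finset.add_sum_erase _ _ (Finset.mem_univ a.2)]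
          abel
        rw [h3]
        exact (hKA _).add (Matrix.posSemidef_sum _ fun j _ => outer_psd _)
      have h4 := (Complex.le_def.1 (psd_trace_mul_nonneg h2 (hE.1 a))).1
      rw [Matrix.sub_mul, Matrix.trace_sub, Complex.sub_re, Complex.zero_re] at h4
      linarith
    refine hup.trans (le_of_eq ?_)
    rw [← Complex.re_sum, ← Matrix.trace_sum]
    congr 2
    conv_lhs => rw [← Matrix.mul_one K, ← hsumw, Finset.mul_sum]
    refine Finset.sum_congr rfl fun a _ => ?_
    have h5 : outer (ψ a.1 a.2) * outer (w a.1 a.2)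
        = Matrix.vecMulVec (outer (ψ a.1 a.2) *ᵥ w a.1 a.2) (star (w a.1 a.2)) := by
      conv_lhs => rw [outer.eq_1 (w a.1 a.2)]
      rw [Matrix.mul_vecMulVec]
    rw [h5, outer_mulVec', hψw, ← hKw, outer, Matrix.mul_vecMulVec]
end
end

section
/- Let (p_i, ρ_i)_{i=1}^m be a linearly independent (LI) ensemble on ℂ^n with r_i = rank ρ_i, and let ψ_{ij} ∈ ℂ^n (1 ≤ i ≤ m, 1 ≤ j ≤ r_i) be vectors forming a basis of ℂ^n with p_iρ_i = ∑_{j=1}^{r_i} ψ_{ij}ψ_{ij}* for each i. Let G be the n×n Gram matrix of the ψ_{ij} (entries ⟨ψ_{i₁j₁}, ψ_{i₂j₂}⟩, conjugate-linear in the first argument, indices ordered by groups i) and let G^{1/2} be its positive definite square root. If there exists λ > 0 such that the i-th r_i×r_i diagonal block of G^{1/2} equals λ·I_{r_i} for every i (equivalently, all eigenvalues of all the diagonal blocks of G^{1/2} are equal), then the pretty good measurement of (p_i, ρ_i) is an optimal POVM for its minimum error discrimination. -/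
open Matrix
open scoped ComplexOrder

noncomputable section

open scoped MatrixOrder in
lemma psd_sqrt_unique {N : Type*} [Fintype N] [DecidableEq N] {A B : Matrix N N ℂ}
    (hA : A.PosSemidef) (hB : B.PosSemidef) (h : A * A = B * B) : A = B :=
  (CFC.mul_self_eq_mul_self_iff A B hA.nonneg hB.nonneg).1 h

open scoped MatrixOrder in
lemma psd_trace_mul_nonneg_s18 {N : Type*} [Fintype N] [DecidableEq N] {A B : Matrix N N ℂ}
    (hA : A.PosSemidef) (hB : B.PosSemidef) : 0 ≤ (A * B).trace.re := by
  obtain ⟨C, rfl⟩ := CStarAlgebra.nonneg_iff_eq_star_mul_self.mp hB.nonneg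
  have h := (hA.mul_mul_conjTranspose_same C).trace_nonneg
  rw [star_eq_conjTranspose, ← Matrix.mul_assoc, Matrix.trace_mul_comm, ← Matrix.mul_assoc]
  exact (Complex.le_def.1 h).1

/-- Sufficient condition: if `pᵢρᵢ = R Eᵢ R` and `Eᵢ R Eᵢ = lam Eᵢ`, then `E` is optimal. -/
lemma optimal_of_conj {m n : ℕ} (p : Fin m → ℝ) (ρ E : Fin m → Matrix (Fin n) (Fin n) ℂ)
    (R : Matrix (Fin n) (Fin n) ℂ) (hR : R.PosDef) (hE : IsPOVM E)
    (lam : ℝ) (hlam : 0 < lam)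
    (h1 : ∀ i, (p i : ℂ) • ρ i = R * E i * R)
    (h2 : ∀ i, E i * R * E i = (lam : ℂ) • E i) : IsOptimal p ρ E := by
  have hs : ∀ F : Fin m → Matrix (Fin n) (Fin n) ℂ,
      succProb p ρ F = ∑ i, ((R * E i * R) * F i).trace.re := by
    intro F
    refine Finset.sum_congr rfl fun i _ => ?_
    rw [← h1 i, Matrix.smul_mul, Matrix.trace_smul, smul_eq_mul, Complex.re_ofReal_mul]
  have ht : ∀ F : Fin m → Matrix (Fin n) (Fin n) ℂ, IsPOVM F →
      ∑ i, (((lam : ℂ) • R) * F i).trace.re = ((lam : ℂ) • R).trace.re := by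
    intro F hF
    rw [← Complex.re_sum, ← Matrix.trace_sum, ← Finset.mul_sum, hF.2, Matrix.mul_one]
  refine ⟨hE, fun F hF => ?_⟩
  have heq : succProb p ρ E = ((lam : ℂ) • R).trace.re := by
    rw [hs, ← ht E hE]
    refine Finset.sum_congr rfl fun i _ => ?_
    rw [Matrix.mul_assoc R, Matrix.mul_assoc R, h2, Matrix.mul_smul, Matrix.smul_mul]
  rw [heq, hs, ← ht F hF]
  refine Finset.sum_le_sum fun i _ => ?_
  have hl : (lam : ℂ) ≠ 0 := by exact_mod_cast hlam.ne'
  have key : ((lam : ℂ) • R - R * E i * R).PosSemidef := by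
    have hEh : (E i)ᴴ = E i := (hE.1 i).1
    have hRh : Rᴴ = R := hR.1
    have e : (lam : ℂ) • R - R * E i * R =
        ((lam⁻¹ : ℝ) : ℂ) • (((lam : ℂ) • 1 - R * E i) * R * ((lam : ℂ) • 1 - R * E i)ᴴ) := by
      have hx : R * E i * R * (E i * R) = (lam : ℂ) • (R * E i * R) := by
        have : R * E i * R * (E i * R) = R * (E i * R * E i) * R := by
          simp only [Matrix.mul_assoc]
        rw [this, h2]; simp
      simp only [conjTranspose_sub, conjTranspose_smul, conjTranspose_mul, conjTranspose_one,
        hEh, hRh, Matrix.sub_mul, Matrix.mul_sub, Matrix.smul_mul, Matrix.mul_smul,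
        Matrix.one_mul, Matrix.mul_one, hx]
      simp only [← Matrix.mul_assoc, Complex.star_def, Complex.conj_ofReal, sub_self, sub_zero,
        smul_sub, smul_smul, Complex.ofReal_inv]
      simp [hl]
    rw [e]
    refine PosSemidef.smul (hR.posSemidef.mul_mul_conjTranspose_same _) ?_
    exact_mod_cast (inv_pos.2 hlam).le
  have := psd_trace_mul_nonneg_s18 key (hF.1 i)
  rw [Matrix.sub_mul, Matrix.trace_sub, Complex.sub_re] at this
  linarith

/-- If all diagonal blocks of `G^{1/2}` (Gram matrix of a pure-state decomposition of
an LI ensemble) equal `λ·I`, then the pretty good measurement of the ensemble is an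
optimal POVM for its minimum error discrimination. -/
theorem stmt_18 {m n : ℕ} (p : Fin m → ℝ) (ρ : Fin m → Matrix (Fin n) (Fin n) ℂ)
    (hens : IsLIEnsemble p ρ)
    (r : Fin m → ℕ) (hr : ∀ i, (ρ i).rank = r i)
    (ψ : ((i : Fin m) × Fin (r i)) → (Fin n → ℂ))
    (hli : LinearIndependent ℂ ψ) (hsp : Submodule.span ℂ (Set.range ψ) = ⊤)
    (hdec : ∀ i, (p i : ℂ) • ρ i = ∑ j : Fin (r i), outer (ψ ⟨i, j⟩))
    (G : Matrix ((i : Fin m) × Fin (r i)) ((i : Fin m) × Fin (r i)) ℂ)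
    (hG : ∀ a b, G a b = star (ψ a) ⬝ᵥ ψ b)
    (RG : Matrix ((i : Fin m) × Fin (r i)) ((i : Fin m) × Fin (r i)) ℂ)
    (hRG : RG.PosDef) (hRG2 : RG * RG = G)
    (lam : ℝ) (hlam : 0 < lam)
    (hblock : ∀ (i : Fin m) (a b : Fin (r i)),
      RG ⟨i, a⟩ ⟨i, b⟩ = if a = b then (lam : ℂ) else 0) :
    PGMIsOptimal p ρ p ρ := by
  intro R hR hRR
  have hRh : Rᴴ = R := hR.1
  have hRu : IsUnit R.det := (Matrix.isUnit_iff_isUnit_det R).1 hR.isUnit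
  have hRih : (R⁻¹)ᴴ = R⁻¹ := by rw [conjTranspose_nonsing_inv, hRh]
  have hRi : R * R⁻¹ = 1 := Matrix.mul_nonsing_inv _ hRu
  have hiR : R⁻¹ * R = 1 := Matrix.nonsing_inv_mul _ hRu
  -- the matrix whose columns are the vectors `ψ`
  obtain ⟨A, hA⟩ : ∃ A : Matrix (Fin n) ((i : Fin m) × Fin (r i)) ℂ, ∀ x a, A x a = ψ a x :=
    ⟨fun x a => ψ a x, fun _ _ => rfl⟩
  have hAG : Aᴴ * A = G := by
    ext a b
    simp [Matrix.mul_apply, hA, hG, dotProduct]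
  obtain ⟨D, hD⟩ : ∃ D : Fin m → Matrix ((i : Fin m) × Fin (r i)) ((i : Fin m) × Fin (r i)) ℂ,
      ∀ i, D i = Matrix.diagonal (fun a => if a.1 = i then 1 else 0) := ⟨_, fun _ => rfl⟩
  have hDs : ∑ i, D i = 1 := by
    ext a b
    simp only [hD, Matrix.sum_apply, Matrix.diagonal_apply, Matrix.one_apply]
    by_cases h : a = b <;> simp [h]
  have hDec : ∀ i, (p i : ℂ) • ρ i = A * D i * Aᴴ := by
    intro i
    rw [hdec, hD]
    ext x y
    rw [Matrix.mul_apply, Fintype.sum_sigma, Finset.sum_eq_single i]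
    · simp [Matrix.sum_apply, outer, vecMulVec_apply, hA]
    · intro b _ hb
      simp [hb]
    · simp
  have hDR : ∀ i, D i * RG * D i = (lam : ℂ) • D i := by
    intro i
    ext ⟨a, a'⟩ ⟨b, b'⟩
    rw [hD, Matrix.mul_diagonal, Matrix.diagonal_mul, Matrix.smul_apply, Matrix.diagonal_apply]
    by_cases ha : a = i
    · by_cases hb : b = i
      · subst ha
        subst hb
        simp [hblock]
      · have : a ≠ b := fun h => hb (h ▸ ha)
        simp [hb, this]
    · simp [ha]
  have hAA : A * Aᴴ = R * R := by
    rw [hRR, Finset.sum_congr rfl fun i _ => hDec i, ← Matrix.sum_mul, ← Matrix.mul_sum, hDs,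
      Matrix.mul_one]
  have hUU : (R⁻¹ * A) * (R⁻¹ * A)ᴴ = 1 := by
    rw [conjTranspose_mul, hRih]
    calc R⁻¹ * A * (Aᴴ * R⁻¹) = R⁻¹ * (A * Aᴴ) * R⁻¹ := by simp only [Matrix.mul_assoc]
      _ = (R⁻¹ * R) * (R * R⁻¹) := by rw [hAA]; simp only [Matrix.mul_assoc]
      _ = 1 := by rw [hRi, hiR, Matrix.mul_one]
  have hAU : A = R * (R⁻¹ * A) := by rw [← Matrix.mul_assoc, hRi, Matrix.one_mul]
  generalize R⁻¹ * A = U at hUU hAU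
  have hRGU : RG = Uᴴ * R * U := by
    refine psd_sqrt_unique hRG.posSemidef (hR.posSemidef.conjTranspose_mul_mul_same U) ?_
    rw [hRG2, ← hAG, hAU, conjTranspose_mul, hRh]
    calc Uᴴ * R * (R * U) = Uᴴ * R * (1 : Matrix (Fin n) (Fin n) ℂ) * (R * U) := by rw [Matrix.mul_one]
      _ = Uᴴ * R * U * (Uᴴ * R * U) := by rw [← hUU]; simp only [Matrix.mul_assoc]
  have hE : ∀ i, R⁻¹ * ((p i : ℂ) • ρ i) * R⁻¹ = U * D i * Uᴴ := by
    intro i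
    rw [hDec, hAU, conjTranspose_mul, hRh]
    calc R⁻¹ * (R * U * D i * (Uᴴ * R)) * R⁻¹ = (R⁻¹ * R) * (U * D i * Uᴴ) * (R * R⁻¹) := by
          simp only [Matrix.mul_assoc]
      _ = _ := by rw [hRi, hiR, Matrix.mul_one, Matrix.one_mul]
  have hfun : (fun i => R⁻¹ * ((p i : ℂ) • ρ i) * R⁻¹) = fun i => U * D i * Uᴴ := funext hE
  rw [hfun]
  refine optimal_of_conj p ρ _ R hR ⟨fun i => ?_, ?_⟩ lam hlam (fun i => ?_) (fun i => ?_)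
  · refine PosSemidef.mul_mul_conjTranspose_same ?_ U
    rw [hD]
    refine PosSemidef.diagonal fun a => ?_
    by_cases h : a.1 = i <;> simp [h]
  · show ∑ i, U * D i * Uᴴ = 1
    rw [← Matrix.sum_mul, ← Matrix.mul_sum, hDs, Matrix.mul_one, hUU]
  · rw [hDec, hAU, conjTranspose_mul, hRh]
    simp only [Matrix.mul_assoc]
  · calc U * D i * Uᴴ * R * (U * D i * Uᴴ) = U * (D i * (Uᴴ * R * U) * D i) * Uᴴ := by
          simp only [Matrix.mul_assoc]
      _ = _ := by rw [← hRGU, hDR]; simp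
end
end
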